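/- arXiv:1306.5116 — 8 statements merged into one kernel-verified Lean document; each statement's English description precedes it below -/
import Mathlib

section
/- Assume the matrix A is cofinal. Let e₁e₂e₃⋯ be an infinite path in the directed graph G associated to A. Then for every vertex v ∈ V there exist an index i ∈ ℕ and a finite path μ in G such that s(μ) = v and r(μ) = s(e_i). -/
open scoped ENNReal
open Filter

variable {V : Type*}

/-- The set of vertices of the graph of `A` that emit no edges or infinitely many edges. -/
def VInf (A : V → V → ℝ≥0∞) : Set V :=
  {v | {w | A v w ≠ 0} = ∅ ∨ {w | A v w ≠ 0}.Infinite}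

/-- A set of vertices is hereditary if every edge with source in it has range in it. -/
def Hereditary (A : V → V → ℝ≥0∞) (H : Set V) : Prop :=
  ∀ ⦃v w : V⦄, v ∈ H → A v w ≠ 0 → w ∈ H

/-- A set of vertices is saturated if it contains every finite emitter all of whose
out-neighbours lie in it. -/
def Saturated (A : V → V → ℝ≥0∞) (H : Set V) : Prop :=
  ∀ v : V, v ∉ VInf A → (∀ w, A v w ≠ 0 → w ∈ H) → v ∈ H

/-- `A` is cofinal if the only hereditary and saturated subsets are `∅` and `V`. -/
def Cofinal (A : V → V → ℝ≥0∞) : Prop :=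
  ∀ H : Set V, Hereditary A H → Saturated A H → H = ∅ ∨ H = Set.univ

/-- Matrix powers of `A`, with entries in `[0,∞]`. -/
noncomputable def Apow [DecidableEq V] (A : V → V → ℝ≥0∞) : ℕ → V → V → ℝ≥0∞
  | 0 => fun v w => if v = w then 1 else 0
  | n + 1 => fun v w => ∑' u, A v u * Apow A n u w

/-- `e^β` as an extended nonnegative real. -/
noncomputable def expb (β : ℝ) : ℝ≥0∞ := ENNReal.ofReal (Real.exp β)

/-- `e^{-nβ}` as an extended nonnegative real. -/
noncomputable def expn (β : ℝ) (n : ℕ) : ℝ≥0∞ := ENNReal.ofReal (Real.exp (-(n : ℝ) * β))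

/-- A vector `ξ : V → [0,∞)` is almost `β`-harmonic for `A` if
`∑_w A_{vw} ξ_w = e^β ξ_v` off `V_∞` and `∑_w A_{vw} ξ_w ≤ e^β ξ_v` on `V_∞`. -/
def IsAlmostHarmonic (A : V → V → ℝ≥0∞) (β : ℝ) (ξ : V → ℝ≥0∞) : Prop :=
  (∀ v, ξ v ≠ ⊤) ∧
  (∀ v, v ∉ VInf A → ∑' w, A v w * ξ w = expb β * ξ v) ∧
  (∀ v, v ∈ VInf A → ∑' w, A v w * ξ w ≤ expb β * ξ v)

/-- A vector `ξ : V → [0,∞)` is `β`-harmonic for `A` if `∑_w A_{vw} ξ_w = e^β ξ_v`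
for every vertex `v`. -/
def IsHarmonic (A : V → V → ℝ≥0∞) (β : ℝ) (ξ : V → ℝ≥0∞) : Prop :=
  (∀ v, ξ v ≠ ⊤) ∧ ∀ v, ∑' w, A v w * ξ w = expb β * ξ v

/-- The non-wandering vertices: those admitting a loop of positive length. -/
def NW (A : V → V → ℝ≥0∞) : Set V :=
  {v | Relation.TransGen (fun a b => A a b ≠ 0) v v}

/-- Standing assumptions i)–iii): `A` is cofinal, the graph has no sinks, the entries of
`A` are finite and all powers of `A` have finite entries. -/
def Standing [DecidableEq V] (A : V → V → ℝ≥0∞) : Prop :=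
  Cofinal A ∧ (∀ v, ∃ w, A v w ≠ 0) ∧ (∀ v w, A v w ≠ ⊤) ∧
    ∀ (n : ℕ) (v w : V), Apow A n v w ≠ ⊤

/-- A function `k` supported on `V_∞` is `β`-summable when
`∑_{u ∈ V_∞} ∑_n e^{-nβ} A^n_{uu} k_u < ∞`. -/
def BSummable [DecidableEq V] (A : V → V → ℝ≥0∞) (β : ℝ) (k : V → ℝ≥0∞) : Prop :=
  (∀ u, u ∉ VInf A → k u = 0) ∧ (∑' u, ∑' n, expn β n * Apow A n u u * k u) ≠ ⊤

/-- `k̂_v = ∑_{u ∈ V_∞} ∑_n e^{-nβ} A^n_{vu} k_u` (for `k` supported on `V_∞`). -/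
noncomputable def khat [DecidableEq V] (A : V → V → ℝ≥0∞) (β : ℝ) (k : V → ℝ≥0∞) (v : V) :
    ℝ≥0∞ :=
  ∑' u, ∑' n, expn β n * Apow A n v u * k u

/-- The first-return quantities `r_{vw}(n)`: `r_{vw}(0) = 0`, `r_{vw}(1) = A_{vw}` and
`r_{vw}(n+1) = ∑_{u ≠ w} A_{vu} r_{uw}(n)` for `n ≥ 1`. -/
noncomputable def fr [DecidableEq V] (A : V → V → ℝ≥0∞) (w : V) : ℕ → V → ℝ≥0∞
  | 0 => fun _ => 0
  | 1 => fun v => A v w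
  | n + 2 => fun v => ∑' u, if u = w then 0 else A v u * fr A w (n + 1) u

/-- The vertices from which some finite path, possibly of length zero, leads into `S`. Cofinality is
applied to the complement of this set. -/
def reachingSet (A : V → V → ℝ≥0∞) (S : Set V) : Set V :=
  {v | ∃ w ∈ S, Relation.ReflTransGen (fun a b => A a b ≠ 0) v w}

section ReachingSet

variable {A : V → V → ℝ≥0∞} {S : Set V}

theorem subset_reachingSet : S ⊆ reachingSet A S :=
  fun w hw => ⟨w, hw, .refl⟩

theorem mem_reachingSet_of_edge {v w : V} (hvw : A v w ≠ 0) (hw : w ∈ reachingSet A S) :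
    v ∈ reachingSet A S := by
  obtain ⟨s, hs, hws⟩ := hw
  exact ⟨s, hs, hws.head hvw⟩

theorem hereditary_compl_reachingSet : Hereditary A (reachingSet A S)ᶜ :=
  fun _ _ hv hvw hw => hv (mem_reachingSet_of_edge hvw hw)

theorem exists_edge_mem_reachingSet (hS : ∀ s ∈ S, s ∉ VInf A → ∃ t ∈ S, A s t ≠ 0)
    {v : V} (hv : v ∈ reachingSet A S) (hreg : v ∉ VInf A) :
    ∃ w ∈ reachingSet A S, A v w ≠ 0 := by
  obtain ⟨s, hs, hvs⟩ := hv
  rcases hvs.cases_head with rfl | ⟨w, hvw, hws⟩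
  · obtain ⟨t, ht, hvt⟩ := hS v hs hreg
    exact ⟨t, subset_reachingSet ht, hvt⟩
  · exact ⟨w, ⟨s, hs, hws⟩, hvw⟩

theorem saturated_compl_reachingSet (hS : ∀ s ∈ S, s ∉ VInf A → ∃ t ∈ S, A s t ≠ 0) :
    Saturated A (reachingSet A S)ᶜ := by
  intro v hreg hout hv
  obtain ⟨w, hw, hvw⟩ := exists_edge_mem_reachingSet hS hv hreg
  exact hout w hvw hw

end ReachingSet

theorem stmt0_general {A : V → V → ℝ≥0∞} (hco : Cofinal A) {S : Set V} (hne : S.Nonempty)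
    (hS : ∀ s ∈ S, s ∉ VInf A → ∃ t ∈ S, A s t ≠ 0) (v : V) :
    ∃ w ∈ S, Relation.ReflTransGen (fun a b => A a b ≠ 0) v w := by
  rcases hco _ hereditary_compl_reachingSet (saturated_compl_reachingSet hS) with hempty | huniv
  · exact Set.eq_univ_iff_forall.mp (Set.compl_empty_iff.mp hempty) v
  · exact absurd (Set.compl_univ_iff.mp huniv) (hne.mono subset_reachingSet).ne_empty

/-- If `A` is cofinal and `x₀ x₁ x₂ ⋯` is an infinite path in the graph `G` of
`A`, then for every vertex `v` there are an index `i` and a finite path in `G` from `v` to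
the `i`-th vertex of the path. -/
theorem stmt0 [Countable V] [DecidableEq V] (A : V → V → ℝ≥0∞)
    (hAfin : ∀ v w, A v w ≠ ⊤) (hco : Cofinal A)
    (x : ℕ → V) (hx : ∀ i, A (x i) (x (i + 1)) ≠ 0) (v : V) :
    ∃ i : ℕ, Relation.ReflTransGen (fun a b => A a b ≠ 0) v (x i) := by
  simpa only [Set.exists_range_iff] using stmt0_general hco (Set.range_nonempty x)
    (Set.forall_mem_range.mpr fun i _ => ⟨x (i + 1), Set.mem_range_self _, hx i⟩) v
end

section
/- Assume the matrix A is cofinal. Then the set NW of non-wandering vertices is a (possibly empty) hereditary subset of V, and the non-wandering subgraph G^NW (with vertex set NW and all edges of G emitted from vertices of NW) is strongly connected: for any pair v, w ∈ NW there is a finite path μ in G with s(μ) = v and r(μ) = w. -/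
open scoped ENNReal
open Filter

variable {V : Type*}

/-!
If `w` is non-wandering, the vertices from which `w` cannot be reached form a hereditary and
saturated set missing `w`, so by cofinality there are none: every vertex reaches `w`. The
range of an edge emitted by a non-wandering `v` therefore reaches `v` and lies on a loop itself.
-/

/-- The edge relation of the directed graph of `A`. It is reducible, so that paths can be written
`Relation.TransGen (Edge A)` interchangeably with the unfolded form used for `NW`. -/
abbrev Edge (A : V → V → ℝ≥0∞) (v w : V) : Prop :=
  A v w ≠ 0

section Reachability

open Relation

theorem hereditary_setOf_not_transGen (A : V → V → ℝ≥0∞) (w : V) :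
    Hereditary A {v | ¬ TransGen (Edge A) v w} :=
  fun _ _ hv hvx hxw => hv (.head hvx hxw)

variable {A : V → V → ℝ≥0∞} {w : V}

theorem saturated_setOf_not_transGen (hw : w ∈ NW A) :
    Saturated A {v | ¬ TransGen (Edge A) v w} := by
  intro v _ hsucc hvw
  obtain ⟨x, hvx, hxw⟩ := TransGen.head'_iff.mp hvw
  -- The remaining path from `x` to `w` may be empty; appending the loop at `w` makes it positive.
  exact hsucc x hvx (.trans_right hxw hw)

theorem Cofinal.transGen_of_mem_NW (hA : Cofinal A) (hw : w ∈ NW A) (v : V) :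
    TransGen (Edge A) v w := by
  rcases hA _ (hereditary_setOf_not_transGen A w) (saturated_setOf_not_transGen hw) with
    hempty | huniv
  · exact not_not.mp (Set.eq_empty_iff_forall_notMem.mp hempty v)
  · exact absurd hw (Set.eq_univ_iff_forall.mp huniv w)

theorem Cofinal.hereditary_NW (hA : Cofinal A) : Hereditary A (NW A) :=
  fun _ w hv hvw => .tail (hA.transGen_of_mem_NW hv w) hvw

theorem stmt1_general (hA : Cofinal A) :
    Hereditary A (NW A) ∧ ∀ v, ∀ w ∈ NW A, TransGen (Edge A) v w :=
  ⟨hA.hereditary_NW, fun v _ hw => hA.transGen_of_mem_NW hw v⟩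

end Reachability

/-- If `A` is cofinal then `NW` is a hereditary subset of `V` and the
non-wandering subgraph is strongly connected: any two vertices of `NW` are joined by a
finite path in `G`. -/
theorem stmt1 [Countable V] [DecidableEq V] (A : V → V → ℝ≥0∞)
    (hAfin : ∀ v w, A v w ≠ ⊤) (hco : Cofinal A) :
    Hereditary A (NW A) ∧
      ∀ v ∈ NW A, ∀ w ∈ NW A, Relation.TransGen (fun a b => A a b ≠ 0) v w :=
  ⟨(stmt1_general hco).1, fun v _ => (stmt1_general hco).2 v⟩
end

section
/- Assume the matrix A is cofinal and let β ∈ ℝ. Let H be a non-empty hereditary subset of V and η : H → [0,∞) a function such that ∑_{w∈H} A_{vw} η_w = e^β η_v for all v ∈ H∖V_∞ and ∑_{w∈H} A_{vw} η_w ≤ e^β η_v for all v ∈ H ∩ V_∞. Then there is a unique almost β-harmonic vector ξ : V → [0,∞) for A with ξ_v = η_v for all v ∈ H. -/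
open scoped ENNReal
open Filter

variable {V : Type*}

/-!
By cofinality the saturation of `H` is all of `V`, and every vertex outside `H` enters it as a
finite emitter all of whose out-neighbours entered before. Hence the edges leaving vertices
outside `H` form a well-founded relation, and off `H` an almost `β`-harmonic vector satisfies
`ξ_v = e^{-β} ∑_w A_{vw} ξ_w`, which determines it recursively from its values on `H`. Conversely,
the vector defined by this recursion is finite, because off `H` each sum involved has finitely many
nonzero terms.
-/

theorem existsUnique_isFixedPt_of_wellFounded {α : Type*} {X : α → Type*} [∀ a, Nonempty (X a)]
    {r : α → α → Prop} (hr : WellFounded r) (G : (∀ a, X a) → ∀ a, X a)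
    (hG : ∀ a ξ ζ, (∀ b, r b a → ξ b = ζ b) → G ξ a = G ζ a) :
    ∃! ξ, Function.IsFixedPt G ξ := by
  classical
  let F (a : α) (ξ : ∀ b, r b a → X b) : X a :=
    G (fun b ↦ if h : r b a then ξ b h else Classical.arbitrary _) a
  have hfix : Function.IsFixedPt G (hr.fix F) := funext fun a ↦ by
    rw [hr.fix_eq]
    exact hG a _ _ fun b hb ↦ by rw [dif_pos hb]
  refine ⟨hr.fix F, hfix, fun ζ hζ ↦ funext fun a ↦ ?_⟩
  induction a using hr.induction with
  | h a ih => rw [← hζ, ← hfix, hG a _ _ ih]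

section WeightedSums

variable {ι : Type*}

theorem tsum_mul_congr_of_ne_zero {R : Type*} [NonUnitalNonAssocSemiring R] [TopologicalSpace R]
    {a x y : ι → R} (h : ∀ i, a i ≠ 0 → x i = y i) : ∑' i, a i * x i = ∑' i, a i * y i := by
  refine tsum_congr fun i ↦ ?_
  by_cases hi : a i = 0
  · rw [hi, zero_mul, zero_mul]
  · rw [h i hi]

theorem tsum_mul_ne_top_of_finite_support {a x : ι → ℝ≥0∞} (hfin : a.support.Finite)
    (ha : ∀ i, a i ≠ ⊤) (hx : ∀ i, a i ≠ 0 → x i ≠ ⊤) : ∑' i, a i * x i ≠ ⊤ := by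
  have hsupp : Function.support (fun i ↦ a i * x i) ⊆ hfin.toFinset := fun i hi ↦ by
    simpa using left_ne_zero_of_mul hi
  rw [tsum_eq_sum' hsupp]
  exact ENNReal.sum_ne_top.2 fun i hi ↦ ENNReal.mul_ne_top (ha i) (hx i (by simpa using hi))

end WeightedSums

theorem expb_ne_zero (β : ℝ) : expb β ≠ 0 :=
  (ENNReal.ofReal_pos.2 β.exp_pos).ne'

theorem expb_ne_top (β : ℝ) : expb β ≠ ⊤ :=
  ENNReal.ofReal_ne_top

section Graph

variable {A : V → V → ℝ≥0∞} {H : Set V} {v : V}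

theorem finite_support_of_notMem_VInf (hv : v ∉ VInf A) : (A v).support.Finite :=
  Set.not_infinite.1 fun h ↦ hv (.inr h)

theorem Hereditary.tsum_mul_eq_tsum_subtype (hH : Hereditary A H) (hv : v ∈ H) (ξ : V → ℝ≥0∞) :
    ∑' w, A v w * ξ w = ∑' w : H, A v w * ξ w :=
  (tsum_subtype_eq_of_support_subset fun _ hw ↦ hH hv (left_ne_zero_of_mul hw)).symm

/-- Membership in the saturation of `H`, the smallest saturated set of vertices containing `H`.
It is encoded inductively, so that a vertex outside `H` comes with a derivation through its
out-neighbours. -/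
inductive InSaturation (A : V → V → ℝ≥0∞) (H : Set V) : V → Prop
  | of_mem {v : V} (hv : v ∈ H) : InSaturation A H v
  | of_out {v : V} (hv : v ∉ VInf A) (hout : ∀ w, A v w ≠ 0 → InSaturation A H w) :
      InSaturation A H v

theorem InSaturation.notMem_VInf (h : InSaturation A H v) (hv : v ∉ H) : v ∉ VInf A := by
  cases h with
  | of_mem hvH => exact absurd hvH hv
  | of_out hvInf _ => exact hvInf

theorem Hereditary.inSaturation (hH : Hereditary A H) : Hereditary A {v | InSaturation A H v} := by
  rintro v w (hv | ⟨-, hout⟩) hvw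
  · exact .of_mem (hH hv hvw)
  · exact hout w hvw

theorem Cofinal.inSaturation (hA : Cofinal A) (hne : H.Nonempty) (hH : Hereditary A H) (v : V) :
    InSaturation A H v := by
  have huniv : {v | InSaturation A H v} = Set.univ :=
    (hA _ hH.inSaturation fun _ ↦ .of_out).resolve_left
      (hne.mono fun _ ↦ InSaturation.of_mem).ne_empty
  exact Set.eq_univ_iff_forall.1 huniv v

theorem wellFounded_edge_of_inSaturation (hsat : ∀ v, InSaturation A H v) :
    WellFounded fun w v ↦ v ∉ H ∧ A v w ≠ 0 := by
  refine ⟨fun v ↦ ?_⟩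
  induction hsat v with
  | of_mem hv => exact ⟨_, fun _ h ↦ absurd hv h.1⟩
  | of_out _ _ ih => exact ⟨_, fun w h ↦ ih w h.2⟩

theorem existsUnique_extension_of_wellFounded (hwf : WellFounded fun w v ↦ v ∉ H ∧ A v w ≠ 0)
    {c : ℝ≥0∞} (hc₀ : c ≠ 0) (hc : c ≠ ⊤) (η : V → ℝ≥0∞) :
    ∃! ξ : V → ℝ≥0∞, (∀ v ∈ H, ξ v = η v) ∧ ∀ v ∉ H, ∑' w, A v w * ξ w = c * ξ v := by
  classical
  let G (ξ : V → ℝ≥0∞) (v : V) : ℝ≥0∞ := if v ∈ H then η v else (∑' w, A v w * ξ w) / c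
  have isFixedPt_iff (ξ : V → ℝ≥0∞) : Function.IsFixedPt G ξ ↔
      (∀ v ∈ H, ξ v = η v) ∧ ∀ v ∉ H, ∑' w, A v w * ξ w = c * ξ v := by
    simp only [Function.IsFixedPt, funext_iff, G, ite_eq_iff', forall_and]
    refine and_congr (forall₂_congr fun _ _ ↦ eq_comm) (forall₂_congr fun v _ ↦ ?_)
    rw [eq_comm, ENNReal.eq_div_iff hc₀ hc, eq_comm]
  refine (existsUnique_congr isFixedPt_iff).1 <|
    existsUnique_isFixedPt_of_wellFounded hwf G fun v ξ ζ hξζ ↦ ?_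
  by_cases hv : v ∈ H
  · simp only [G, if_pos hv]
  · simp only [G, if_neg hv]
    rw [tsum_mul_congr_of_ne_zero fun w hw ↦ hξζ w ⟨hv, hw⟩]

theorem InSaturation.ne_top (h : InSaturation A H v) (hA : ∀ v w, A v w ≠ ⊤) {c : ℝ≥0∞}
    (hc : c ≠ 0) {ξ : V → ℝ≥0∞} (hξH : ∀ v ∈ H, ξ v ≠ ⊤)
    (hξ : ∀ v ∉ H, ∑' w, A v w * ξ w = c * ξ v) : ξ v ≠ ⊤ := by
  induction h with
  | of_mem hv => exact hξH _ hv
  | @of_out v hv _ ih =>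
    by_cases hvH : v ∈ H
    · exact hξH v hvH
    · have hsum : c * ξ v ≠ ⊤ := hξ v hvH ▸
        tsum_mul_ne_top_of_finite_support (finite_support_of_notMem_VInf hv) (hA v) ih
      exact fun htop ↦ hsum (htop ▸ ENNReal.mul_top hc)

end Graph

theorem stmt2_general (A : V → V → ℝ≥0∞) (hAfin : ∀ v w, A v w ≠ ⊤) (β : ℝ)
    (H : Set V) (hsat : ∀ v, InSaturation A H v) (hH : Hereditary A H)
    (η : V → ℝ≥0∞) (hηfin : ∀ v ∈ H, η v ≠ ⊤)
    (hη1 : ∀ v ∈ H, v ∉ VInf A → ∑' w : H, A v (w : V) * η (w : V) = expb β * η v)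
    (hη2 : ∀ v ∈ H, v ∈ VInf A → ∑' w : H, A v (w : V) * η (w : V) ≤ expb β * η v) :
    ∃! ξ : V → ℝ≥0∞, IsAlmostHarmonic A β ξ ∧ ∀ v ∈ H, ξ v = η v := by
  refine (existsUnique_congr fun ξ ↦ ⟨?_, ?_⟩).1 <| existsUnique_extension_of_wellFounded
    (wellFounded_edge_of_inSaturation hsat) (expb_ne_zero β) (expb_ne_top β) η
  · rintro ⟨hξH, hξ⟩
    have hrow (v) (hv : v ∈ H) : ∑' w, A v w * ξ w = ∑' w : H, A v w * η w := by
      rw [tsum_mul_congr_of_ne_zero fun w hw ↦ hξH w (hH hv hw), hH.tsum_mul_eq_tsum_subtype hv]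
    have hfin (v) : ξ v ≠ ⊤ :=
      (hsat v).ne_top hAfin (expb_ne_zero β) (fun w hw ↦ hξH w hw ▸ hηfin w hw) hξ
    refine ⟨⟨hfin, fun v hvInf ↦ ?_, fun v hvInf ↦ ?_⟩, hξH⟩
    · by_cases hv : v ∈ H
      · rw [hrow v hv, hη1 v hv hvInf, hξH v hv]
      · exact hξ v hv
    · have hv : v ∈ H := not_imp_not.1 (hsat v).notMem_VInf hvInf
      rw [hrow v hv, hξH v hv]
      exact hη2 v hv hvInf
  · rintro ⟨⟨-, hξ, -⟩, hξH⟩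
    exact ⟨hξH, fun v hv ↦ hξ v ((hsat v).notMem_VInf hv)⟩

/-- If `A` is cofinal, `H` is a non-empty hereditary subset of `V` and
`η : H → [0,∞)` satisfies the (almost) harmonicity conditions on `H`, then there is a
unique almost `β`-harmonic vector for `A` extending `η`. -/
theorem stmt2 [Countable V] [DecidableEq V] (A : V → V → ℝ≥0∞)
    (hAfin : ∀ v w, A v w ≠ ⊤) (hco : Cofinal A) (β : ℝ)
    (H : Set V) (hne : H.Nonempty) (hH : Hereditary A H)
    (η : V → ℝ≥0∞) (hηfin : ∀ v ∈ H, η v ≠ ⊤)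
    (hη1 : ∀ v ∈ H, v ∉ VInf A → ∑' w : H, A v (w : V) * η (w : V) = expb β * η v)
    (hη2 : ∀ v ∈ H, v ∈ VInf A → ∑' w : H, A v (w : V) * η (w : V) ≤ expb β * η v) :
    ∃! ξ : V → ℝ≥0∞, IsAlmostHarmonic A β ξ ∧ ∀ v ∈ H, ξ v = η v :=
  stmt2_general A hAfin β H (hco.inSaturation hne hH) hH η hηfin hη1 hη2
end

section
/- Assume the matrix A is cofinal and that the graph G contains a sink, i.e. a vertex emitting no edges (equivalently, A has a zero row). Then for every β ∈ ℝ there exists a non-zero almost β-harmonic vector for A, and it is unique up to multiplication by non-negative scalars. -/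
open scoped ENNReal
open Filter

variable {V : Type*}

/-! Fix a sink `s`. The set `{s}` is hereditary, and the saturation of a hereditary set is again
hereditary, so cofinality forces every saturated set containing `s` to be all of `V`. The equation
`∑_w A_{vw} ξ_w = e^β ξ_v` at a vertex `v` off `V_∞`, which has finitely many successors, determines
`ξ_v` from the values at the successors and makes it finite when they are. Hence the set where a
solution off `V_∞` is finite and the set where two solutions agree are saturated. Applied to `k̂`
with `k = δ_s`, whose value at `s` is `1`, the first gives existence; applied to an almost harmonic
`ξ` and `ξ_s k̂`, the second gives uniqueness. -/

section Saturation

variable {A : V → V → ℝ≥0∞} {S T : Set V}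

/-- The saturation of a set of vertices: the smallest saturated set containing it. -/
def saturation (A : V → V → ℝ≥0∞) (S : Set V) : Set V :=
  ⋂₀ {T | Saturated A T ∧ S ⊆ T}

theorem subset_saturation : S ⊆ saturation A S :=
  Set.subset_sInter fun _ hT => hT.2

theorem Saturated.saturation_subset (hT : Saturated A T) (hST : S ⊆ T) : saturation A S ⊆ T :=
  Set.sInter_subset_of_mem ⟨hT, hST⟩

theorem saturated_saturation : Saturated A (saturation A S) :=
  fun v hv hsucc _ hT => hT.1 v hv fun w hw => hT.1.saturation_subset hT.2 (hsucc w hw)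

theorem Hereditary.hereditary_saturation (hS : Hereditary A S) : Hereditary A (saturation A S) := by
  let T : Set V := {v | v ∈ saturation A S ∧ ∀ w, A v w ≠ 0 → w ∈ saturation A S}
  have hT : Saturated A T := fun v hv hsucc =>
    ⟨saturated_saturation v hv fun w hw => (hsucc w hw).1, fun w hw => (hsucc w hw).1⟩
  have hST : S ⊆ T := fun v hv =>
    ⟨subset_saturation hv, fun w hw => subset_saturation (hS hv hw)⟩
  exact fun v w hv hvw => (hT.saturation_subset hST hv).2 w hvw

theorem Cofinal.eq_univ_of_saturated (hco : Cofinal A) (hS : Hereditary A S) (hne : S.Nonempty)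
    (hT : Saturated A T) (hST : S ⊆ T) : T = Set.univ := by
  have hsat : saturation A S = Set.univ :=
    (hco _ hS.hereditary_saturation saturated_saturation).resolve_left
      (hne.mono subset_saturation).ne_empty
  exact Set.univ_subset_iff.mp (hsat ▸ hT.saturation_subset hST)

theorem hereditary_singleton_of_sink {s : V} (hs : ∀ w, A s w = 0) : Hereditary A {s} := by
  rintro _ w rfl hw
  exact absurd (hs w) hw

theorem Cofinal.mem_of_saturated_of_sink (hco : Cofinal A) {s : V} (hs : ∀ w, A s w = 0)
    (hT : Saturated A T) (hsT : s ∈ T) (v : V) : v ∈ T := by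
  rw [hco.eq_univ_of_saturated (hereditary_singleton_of_sink hs) (Set.singleton_nonempty s) hT
    (Set.singleton_subset_iff.mpr hsT)]
  exact Set.mem_univ v

theorem mem_VInf_of_sink {s : V} (hs : ∀ w, A s w = 0) : s ∈ VInf A :=
  Or.inl (by simp [hs])

theorem finite_successors_of_notMem_VInf {v : V} (hv : v ∉ VInf A) : {w | A v w ≠ 0}.Finite :=
  Set.not_infinite.mp fun h => hv (Or.inr h)

end Saturation

theorem expn_zero (β : ℝ) : expn β 0 = 1 := by
  simp [expn]

theorem expn_succ (β : ℝ) (n : ℕ) : expn β (n + 1) = (expb β)⁻¹ * expn β n := by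
  rw [expb, expn, expn, ← ENNReal.ofReal_inv_of_pos (Real.exp_pos β), ← Real.exp_neg,
    ← ENNReal.ofReal_mul (Real.exp_nonneg _), ← Real.exp_add]
  push_cast
  ring_nf

section Solutions

variable {A : V → V → ℝ≥0∞} {β : ℝ} {ξ η : V → ℝ≥0∞}

theorem saturated_setOf_ne_top (hA : ∀ v w, A v w ≠ ⊤)
    (hξ : ∀ v ∉ VInf A, ∑' w, A v w * ξ w = expb β * ξ v) : Saturated A {v | ξ v ≠ ⊤} := by
  intro v hv hsucc
  have hfin := finite_successors_of_notMem_VInf hv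
  have hsum : ∑' w, A v w * ξ w = ∑ w ∈ hfin.toFinset, A v w * ξ w :=
    tsum_eq_sum fun w hw => by
      rw [show A v w = 0 by simpa using hw, zero_mul]
  have hne_top : expb β * ξ v ≠ ⊤ := by
    rw [← hξ v hv, hsum]
    exact ENNReal.sum_ne_top.mpr fun w hw =>
      ENNReal.mul_ne_top (hA v w) (hsucc w (by simpa using hw))
  exact (ENNReal.lt_top_of_mul_ne_top_right hne_top (expb_ne_zero β)).ne

theorem saturated_setOf_eq (hξ : ∀ v ∉ VInf A, ∑' w, A v w * ξ w = expb β * ξ v)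
    (hη : ∀ v ∉ VInf A, ∑' w, A v w * η w = expb β * η v) : Saturated A {v | ξ v = η v} := by
  intro v hv hsucc
  have hterm : ∀ w, A v w * ξ w = A v w * η w := fun w => by
    rcases eq_or_ne (A v w) 0 with hw | hw
    · rw [hw, zero_mul, zero_mul]
    · rw [hsucc w hw]
  refine (ENNReal.mul_right_inj (expb_ne_zero β) (expb_ne_top β)).mp ?_
  rw [← hξ v hv, ← hη v hv, tsum_congr hterm]

theorem tsum_mul_const_mul_eq {v : V} (hξ : ∑' w, A v w * ξ w = expb β * ξ v) (c : ℝ≥0∞) :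
    ∑' w, A v w * (c * ξ w) = expb β * (c * ξ v) := by
  simp only [mul_left_comm _ c, ENNReal.tsum_mul_left, hξ]

theorem Cofinal.ne_top_of_sink (hco : Cofinal A) {s : V} (hs : ∀ w, A s w = 0)
    (hA : ∀ v w, A v w ≠ ⊤) (hξ : ∀ v ∉ VInf A, ∑' w, A v w * ξ w = expb β * ξ v)
    (hξs : ξ s ≠ ⊤) (v : V) : ξ v ≠ ⊤ :=
  hco.mem_of_saturated_of_sink hs (saturated_setOf_ne_top hA hξ) hξs v

theorem Cofinal.eq_of_sink (hco : Cofinal A) {s : V} (hs : ∀ w, A s w = 0)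
    (hξ : ∀ v ∉ VInf A, ∑' w, A v w * ξ w = expb β * ξ v)
    (hη : ∀ v ∉ VInf A, ∑' w, A v w * η w = expb β * η v) (hξη : ξ s = η s) (v : V) :
    ξ v = η v :=
  hco.mem_of_saturated_of_sink hs (saturated_setOf_eq hξ hη) hξη v

end Solutions

section Khat

variable [DecidableEq V] {A : V → V → ℝ≥0∞} {β : ℝ} {k : V → ℝ≥0∞}

/-- The Green kernel `∑_n e^{-nβ} A^n_{vu}`, which turns `k̂` into the single sum
`∑_u green A β v u * k_u`. -/
noncomputable def green (A : V → V → ℝ≥0∞) (β : ℝ) (v u : V) : ℝ≥0∞ :=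
  ∑' n, expn β n * Apow A n v u

theorem green_eq_add_tsum (A : V → V → ℝ≥0∞) (β : ℝ) (v u : V) :
    green A β v u = (if v = u then 1 else 0) + (expb β)⁻¹ * ∑' w, A v w * green A β w u := by
  rw [green, tsum_eq_zero_add' ENNReal.summable, expn_zero, one_mul]
  congr 1
  simp only [green, ← ENNReal.tsum_mul_left, Apow, expn_succ]
  rw [ENNReal.tsum_comm]
  exact tsum_congr fun w => tsum_congr fun n => by ring

theorem khat_eq_tsum_green (A : V → V → ℝ≥0∞) (β : ℝ) (k : V → ℝ≥0∞) (v : V) :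
    khat A β k v = ∑' u, green A β v u * k u := by
  simp only [khat, green, ENNReal.tsum_mul_right]

theorem tsum_mul_khat_eq_tsum_tsum (A : V → V → ℝ≥0∞) (β : ℝ) (k : V → ℝ≥0∞) (v : V) :
    ∑' w, A v w * khat A β k w = ∑' u, (∑' w, A v w * green A β w u) * k u := by
  simp only [khat_eq_tsum_green, ← ENNReal.tsum_mul_left, ← ENNReal.tsum_mul_right, mul_assoc]
  exact ENNReal.tsum_comm

theorem khat_eq_add_tsum (A : V → V → ℝ≥0∞) (β : ℝ) (k : V → ℝ≥0∞) (v : V) :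
    khat A β k v = k v + (expb β)⁻¹ * ∑' w, A v w * khat A β k w := by
  have hdiag : ∑' u, (if v = u then 1 else 0) * k u = k v := by simp
  rw [khat_eq_tsum_green, tsum_mul_khat_eq_tsum_tsum, ← ENNReal.tsum_mul_left, ← hdiag,
    ← ENNReal.tsum_add]
  exact tsum_congr fun u => by rw [green_eq_add_tsum, add_mul, mul_assoc]

theorem expb_mul_khat (A : V → V → ℝ≥0∞) (β : ℝ) (k : V → ℝ≥0∞) (v : V) :
    expb β * khat A β k v = expb β * k v + ∑' w, A v w * khat A β k w := by
  rw [khat_eq_add_tsum, mul_add, ENNReal.mul_inv_cancel_left (expb_ne_zero β) (expb_ne_top β)]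

theorem tsum_mul_khat {v : V} (hv : k v = 0) :
    ∑' w, A v w * khat A β k w = expb β * khat A β k v := by
  rw [expb_mul_khat, hv, mul_zero, zero_add]

theorem isAlmostHarmonic_khat (hk : ∀ v ∉ VInf A, k v = 0) (hfin : ∀ v, khat A β k v ≠ ⊤) :
    IsAlmostHarmonic A β (khat A β k) :=
  ⟨hfin, fun v hv => tsum_mul_khat (hk v hv), fun v _ => expb_mul_khat A β k v ▸ le_add_self⟩

theorem khat_sink {s : V} (hs : ∀ w, A s w = 0) : khat A β k s = k s := by
  rw [khat_eq_add_tsum]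
  simp [hs]

end Khat

theorem stmt3_general {A : V → V → ℝ≥0∞} (hA : ∀ v w, A v w ≠ ⊤) (hco : Cofinal A) {s : V}
    (hs : ∀ w, A s w = 0) (β : ℝ) :
    ∃ ξ : V → ℝ≥0∞, (IsAlmostHarmonic A β ξ ∧ ξ ≠ 0) ∧
      ∀ ξ' : V → ℝ≥0∞, IsAlmostHarmonic A β ξ' →
        ∃ c : ℝ≥0∞, c ≠ ⊤ ∧ ∀ v, ξ' v = c * ξ v := by
  classical
  let δ : V → ℝ≥0∞ := Pi.single s 1
  have hδ : ∀ v ∉ VInf A, δ v = 0 := fun v hv =>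
    Pi.single_eq_of_ne (ne_of_mem_of_not_mem (mem_VInf_of_sink hs) hv).symm 1
  let ξ := khat A β δ
  have hξs : ξ s = 1 := (khat_sink hs).trans (Pi.single_eq_same s 1)
  have hξ : ∀ v ∉ VInf A, ∑' w, A v w * ξ w = expb β * ξ v := fun v hv => tsum_mul_khat (hδ v hv)
  have hfin : ∀ v, ξ v ≠ ⊤ := hco.ne_top_of_sink hs hA hξ (hξs ▸ ENNReal.one_ne_top)
  have hne : ξ ≠ 0 := Function.ne_iff.mpr ⟨s, hξs ▸ one_ne_zero⟩
  refine ⟨ξ, ⟨isAlmostHarmonic_khat hδ hfin, hne⟩, fun ξ' hξ' => ⟨ξ' s, hξ'.1 s, ?_⟩⟩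
  exact hco.eq_of_sink hs hξ'.2.1 (fun v hv => tsum_mul_const_mul_eq (hξ v hv) (ξ' s))
    (by rw [hξs, mul_one])

/-- If `A` is cofinal and `G` contains a sink (a zero row of `A`), then for
every `β ∈ ℝ` there is a non-zero almost `β`-harmonic vector for `A`, unique up to
multiplication by non-negative scalars. -/
theorem stmt3 [Countable V] [DecidableEq V] (A : V → V → ℝ≥0∞)
    (hAfin : ∀ v w, A v w ≠ ⊤) (hco : Cofinal A)
    (hsink : ∃ s : V, ∀ w, A s w = 0) :
    ∀ β : ℝ, ∃ ξ : V → ℝ≥0∞, (IsAlmostHarmonic A β ξ ∧ ξ ≠ 0) ∧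
      ∀ ξ' : V → ℝ≥0∞, IsAlmostHarmonic A β ξ' → ξ' ≠ 0 →
        ∃ c : ℝ≥0∞, c ≠ ⊤ ∧ ∀ v, ξ' v = c * ξ v := fun β =>
  let ⟨_, hs⟩ := hsink
  let ⟨ξ, hξ, hunique⟩ := stmt3_general hAfin hco hs β
  ⟨ξ, hξ, fun ξ' hξ' _ => hunique ξ' hξ'⟩
end

section
/- Assume the matrix A is cofinal and let β ∈ ℝ. If ξ is a non-zero almost β-harmonic vector for A, then ξ_v > 0 for all v ∈ V. -/
open scoped ENNReal
open Filter

variable {V : Type*}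

theorem hereditary_setOf_eq_zero {A : V → V → ℝ≥0∞} {c : ℝ≥0∞} {ξ : V → ℝ≥0∞}
    (hle : ∀ v, ∑' w, A v w * ξ w ≤ c * ξ v) : Hereditary A {v | ξ v = 0} := by
  intro v w (hv : ξ v = 0) hvw
  have hsum : ∑' u, A v u * ξ u = 0 := by simpa only [hv, mul_zero, nonpos_iff_eq_zero] using hle v
  exact (mul_eq_zero.mp (ENNReal.tsum_eq_zero.mp hsum w)).resolve_left hvw

theorem saturated_setOf_eq_zero {A : V → V → ℝ≥0∞} {c : ℝ≥0∞} (hc : c ≠ 0) {ξ : V → ℝ≥0∞}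
    (hge : ∀ v, v ∉ VInf A → c * ξ v ≤ ∑' w, A v w * ξ w) : Saturated A {v | ξ v = 0} := by
  intro v hv hzero
  have hsum : ∑' w, A v w * ξ w = 0 :=
    ENNReal.tsum_eq_zero.mpr fun w => mul_eq_zero.mpr (or_iff_not_imp_left.mpr (hzero w))
  have hcv : c * ξ v = 0 := nonpos_iff_eq_zero.mp (hsum ▸ hge v hv)
  exact (mul_eq_zero.mp hcv).resolve_left hc

theorem IsAlmostHarmonic.tsum_le {A : V → V → ℝ≥0∞} {β : ℝ} {ξ : V → ℝ≥0∞}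
    (hξ : IsAlmostHarmonic A β ξ) (v : V) : ∑' w, A v w * ξ w ≤ expb β * ξ v := by
  by_cases hv : v ∈ VInf A
  · exact hξ.2.2 v hv
  · exact (hξ.2.1 v hv).le

theorem stmt4_general (A : V → V → ℝ≥0∞) (hco : Cofinal A) {c : ℝ≥0∞} (hc : c ≠ 0)
    (ξ : V → ℝ≥0∞) (hle : ∀ v, ∑' w, A v w * ξ w ≤ c * ξ v)
    (hge : ∀ v, v ∉ VInf A → c * ξ v ≤ ∑' w, A v w * ξ w) (hne : ξ ≠ 0) :
    ∀ v, 0 < ξ v := by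
  intro v
  rcases hco {v | ξ v = 0} (hereditary_setOf_eq_zero hle) (saturated_setOf_eq_zero hc hge)
    with hempty | huniv
  · exact pos_iff_ne_zero.mpr (Set.eq_empty_iff_forall_notMem.mp hempty v)
  · exact absurd (funext (Set.eq_univ_iff_forall.mp huniv)) hne

/-- If `A` is cofinal and `ξ` is a non-zero almost `β`-harmonic vector for
`A`, then `ξ_v > 0` for every vertex `v`. -/
theorem stmt4 [Countable V] [DecidableEq V] (A : V → V → ℝ≥0∞)
    (hAfin : ∀ v w, A v w ≠ ⊤) (hco : Cofinal A) (β : ℝ)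
    (ξ : V → ℝ≥0∞) (hξ : IsAlmostHarmonic A β ξ) (hne : ξ ≠ 0) :
    ∀ v, 0 < ξ v :=
  stmt4_general A hco (expb_ne_zero β) ξ hξ.tsum_le (fun v hv => (hξ.2.1 v hv).ge) hne
end

section
/- Assume the matrix A is cofinal. Then no vertex of V that fails to be non-wandering is an infinite emitter; that is, every vertex of V emitting infinitely many edges lies in NW. -/
open scoped ENNReal
open Filter

variable {V : Type*}

/-!
For a vertex `v` in `V_∞`, the set of vertices that do not lead to `v` is hereditary and saturated.
As it omits `v`, cofinality makes it empty, so every vertex leads to `v`. If `v` also emits an edge,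
following that edge by a path back to `v` gives a loop.
-/

theorem hereditary_setOf_not_reflTransGen (A : V → V → ℝ≥0∞) (v : V) :
    Hereditary A {u | ¬ Relation.ReflTransGen (fun a b => A a b ≠ 0) u v} :=
  fun _ _ hu huw hwv => hu (hwv.head huw)

theorem saturated_setOf_not_reflTransGen {A : V → V → ℝ≥0∞} {v : V} (hv : v ∈ VInf A) :
    Saturated A {u | ¬ Relation.ReflTransGen (fun a b => A a b ≠ 0) u v} := by
  intro u hu hout huv
  obtain rfl | ⟨w, huw, hwv⟩ := huv.cases_head
  · exact hu hv
  · exact hout w huw hwv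

theorem Cofinal.reflTransGen {A : V → V → ℝ≥0∞} (hA : Cofinal A) {v : V} (hv : v ∈ VInf A)
    (u : V) : Relation.ReflTransGen (fun a b => A a b ≠ 0) u v := by
  obtain hempty | huniv := hA _ (hereditary_setOf_not_reflTransGen A v)
    (saturated_setOf_not_reflTransGen hv)
  · exact not_not.mp (Set.eq_empty_iff_forall_notMem.mp hempty u)
  · exact absurd .refl (Set.eq_univ_iff_forall.mp huniv v)

theorem stmt6_general {A : V → V → ℝ≥0∞} (hA : Cofinal A) {v : V}
    (hv : {w | A v w ≠ 0}.Infinite) : v ∈ NW A := by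
  obtain ⟨w, hvw⟩ := hv.nonempty
  exact .head' hvw (hA.reflTransGen (.inr hv) w)

/-- If `A` is cofinal then every infinite emitter is non-wandering, i.e.
every vertex emitting infinitely many edges lies in `NW`. -/
theorem stmt6 [Countable V] [DecidableEq V] (A : V → V → ℝ≥0∞)
    (hAfin : ∀ v w, A v w ≠ ⊤) (hco : Cofinal A) :
    ∀ v : V, {w | A v w ≠ 0}.Infinite → v ∈ NW A :=
  fun _ hv => stmt6_general hco hv
end

section
/- Assume the standing assumptions, that NW ≠ ∅, and let β > β₀. Then for all v, w ∈ NW one has ∑_{n=0}^∞ A^n_{vw} e^{-nβ} = I_{vw} + (∑_{n=1}^∞ r_{vw}(n) e^{-nβ}) · (∑_{n=0}^∞ A^n_{ww} e^{-nβ}), where I_{vw} = 1 if v = w and 0 otherwise. -/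
open scoped ENNReal
open Filter

variable {V : Type*}

/-!
A path of positive length from `v` to `w` splits uniquely at its first visit to `w` after the
start, so `A^n_{vw} = ∑_{k+l=n} r_{vw}(k) A^l_{ww}` for `n ≥ 1`. Weighting paths of length `n` by
`t^n` turns this convolution into a product of generating functions, the term `n = 0` accounting
for `I_{vw}`. All sums are of terms in `[0,∞]`, so they may be rearranged freely even where they
diverge; the theorem is the case `t = e^{-β}`.
-/

section FirstPassage

open Finset.HasAntidiagonal (antidiagonal mem_antidiagonal sigmaAntidiagonalEquivProd)

theorem ennreal_tsum_mul_tsum_eq_tsum_sum_antidiagonal {ι : Type*} [AddMonoid ι]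
    [Finset.HasAntidiagonal ι] (f g : ι → ℝ≥0∞) :
    (∑' i, f i) * ∑' j, g j = ∑' n, ∑ p ∈ antidiagonal n, f p.1 * g p.2 := by
  calc (∑' i, f i) * ∑' j, g j
      = ∑' p : ι × ι, f p.1 * g p.2 := by
        simp only [ENNReal.tsum_prod', ENNReal.tsum_mul_left, ENNReal.tsum_mul_right]
    _ = ∑' q : Σ n : ι, antidiagonal n, f q.2.1.1 * g q.2.1.2 :=
        (sigmaAntidiagonalEquivProd.tsum_eq fun p : ι × ι => f p.1 * g p.2).symm
    _ = ∑' n, ∑ p ∈ antidiagonal n, f p.1 * g p.2 := by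
        rw [ENNReal.tsum_sigma']
        exact tsum_congr fun n =>
          Finset.tsum_subtype (antidiagonal n) fun p => f p.1 * g p.2

theorem ennreal_tsum_mul_pow_mul_tsum_mul_pow (a b : ℕ → ℝ≥0∞) (t : ℝ≥0∞) :
    (∑' n, a n * t ^ n) * ∑' n, b n * t ^ n =
      ∑' n, (∑ p ∈ antidiagonal n, a p.1 * b p.2) * t ^ n := by
  rw [ennreal_tsum_mul_tsum_eq_tsum_sum_antidiagonal]
  refine tsum_congr fun n => ?_
  rw [Finset.sum_mul]
  refine Finset.sum_congr rfl fun p hp => ?_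
  rw [← mem_antidiagonal.mp hp, pow_add, mul_mul_mul_comm]

theorem expn_eq_expb_neg_pow (β : ℝ) (n : ℕ) : expn β n = expb (-β) ^ n := by
  rw [expn, expb, ← ENNReal.ofReal_pow (Real.exp_pos _).le, ← Real.exp_nat_mul, neg_mul, mul_neg]

variable [DecidableEq V] (A : V → V → ℝ≥0∞)

theorem fr_succ_succ (n : ℕ) (v w : V) :
    fr A w (n + 2) v = ∑' u, if u = w then 0 else A v u * fr A w (n + 1) u :=
  rfl

theorem Apow_succ_eq_add_tsum_ite (n : ℕ) (v w : V) :
    Apow A (n + 1) v w =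
      A v w * Apow A n w w + ∑' u, if u = w then 0 else A v u * Apow A n u w := by
  rw [Apow]
  -- `convert`, because the library lemma decides `u = w` classically.
  convert ENNReal.tsum_eq_add_tsum_ite (f := fun u => A v u * Apow A n u w) w

theorem sum_antidiagonal_fr_succ_succ_mul (n : ℕ) (v w : V) (b : ℕ → ℝ≥0∞) :
    ∑ p ∈ antidiagonal n, fr A w (p.1 + 2) v * b p.2 =
      ∑' u, if u = w then 0 else
        A v u * ∑ p ∈ antidiagonal n, fr A w (p.1 + 1) u * b p.2 := by
  simp only [fr_succ_succ, ← ENNReal.tsum_mul_right]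
  rw [← Summable.tsum_finsetSum fun _ _ => ENNReal.summable]
  refine tsum_congr fun u => ?_
  split_ifs
  · simp only [zero_mul, Finset.sum_const_zero]
  · simp only [Finset.mul_sum, mul_assoc]

theorem Apow_succ_eq_sum_antidiagonal_fr_succ (n : ℕ) (v w : V) :
    Apow A (n + 1) v w =
      ∑ p ∈ antidiagonal n, fr A w (p.1 + 1) v * Apow A p.2 w w := by
  induction n generalizing v with
  | zero => simp [Apow, fr]
  | succ n ih =>
    calc Apow A (n + 2) v w
        = A v w * Apow A (n + 1) w w +
            ∑' u, if u = w then 0 else A v u * Apow A (n + 1) u w :=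
          Apow_succ_eq_add_tsum_ite A (n + 1) v w
      _ = A v w * Apow A (n + 1) w w +
            ∑ p ∈ antidiagonal n, fr A w (p.1 + 2) v * Apow A p.2 w w := by
          simp only [ih, sum_antidiagonal_fr_succ_succ_mul A n v w fun l => Apow A l w w]
      _ = ∑ p ∈ antidiagonal (n + 1), fr A w (p.1 + 1) v * Apow A p.2 w w := by
          rw [Finset.Nat.sum_antidiagonal_succ, fr]

theorem Apow_eq_sum_antidiagonal_fr {n : ℕ} (hn : n ≠ 0) (v w : V) :
    Apow A n v w = ∑ p ∈ antidiagonal n, fr A w p.1 v * Apow A p.2 w w := by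
  obtain ⟨n, rfl⟩ := Nat.exists_eq_succ_of_ne_zero hn
  rw [Finset.Nat.sum_antidiagonal_succ, fr, zero_mul, zero_add,
    Apow_succ_eq_sum_antidiagonal_fr_succ]

theorem stmt12_general (t : ℝ≥0∞) (v w : V) :
    ∑' n : ℕ, Apow A n v w * t ^ n =
      (if v = w then (1 : ℝ≥0∞) else 0) +
        (∑' n : ℕ, fr A w n v * t ^ n) * ∑' n : ℕ, Apow A n w w * t ^ n := by
  let c : ℕ → ℝ≥0∞ := fun n => ∑ p ∈ antidiagonal n, fr A w p.1 v * Apow A p.2 w w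
  have c_zero : c 0 = 0 := by simp [c, fr]
  calc ∑' n, Apow A n v w * t ^ n
      = (if v = w then 1 else 0) + ∑' n, Apow A (n + 1) v w * t ^ (n + 1) := by
        rw [tsum_eq_zero_add' ENNReal.summable, Apow, pow_zero, mul_one]
    _ = (if v = w then 1 else 0) + ∑' n, c (n + 1) * t ^ (n + 1) := by
        simp only [Apow_eq_sum_antidiagonal_fr A (Nat.succ_ne_zero _) v w, c]
    _ = (if v = w then 1 else 0) + ∑' n, c n * t ^ n := by
        rw [tsum_eq_zero_add' (f := fun n => c n * t ^ n) ENNReal.summable, c_zero, zero_mul,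
          zero_add]
    _ = (if v = w then 1 else 0) + (∑' n, fr A w n v * t ^ n) * ∑' n, Apow A n w w * t ^ n := by
        rw [ennreal_tsum_mul_pow_mul_tsum_mul_pow]

end FirstPassage

/-- Under the standing assumptions, if `NW ≠ ∅` and `β > β₀`, then for all
`v, w ∈ NW`:
`∑_n A^n_{vw} e^{-nβ} = I_{vw} + (∑_n r_{vw}(n) e^{-nβ}) (∑_n A^n_{ww} e^{-nβ})`. -/
theorem stmt12 [Countable V] [DecidableEq V] (A : V → V → ℝ≥0∞)
    (hst : Standing A) (β₀ : ℝ)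
    (hβ₀ : ∀ v ∈ NW A,
      Filter.limsup (fun n : ℕ => Apow A n v v ^ ((n : ℝ)⁻¹)) Filter.atTop = expb β₀)
    (hNW : (NW A).Nonempty) (β : ℝ) (hβ : β₀ < β) :
    ∀ v ∈ NW A, ∀ w ∈ NW A,
      ∑' n : ℕ, Apow A n v w * expn β n =
        (if v = w then (1 : ℝ≥0∞) else 0) +
          (∑' n : ℕ, fr A w n v * expn β n) * ∑' n : ℕ, Apow A n w w * expn β n := by
  intro v _ w _
  simpa only [expn_eq_expb_neg_pow] using stmt12_general A (expb (-β)) v w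
end

section
/- Assume the standing assumptions and let β ∈ ℝ. Let ξ : V → [0,∞) satisfy ∑_{w∈V} A_{vw} ξ_w ≤ e^β ξ_v for all v ∈ V, and assume ξ_{v₀} ≠ 0 for some vertex v₀ ∈ V. Then ∑_{n=1}^∞ r_{vv₀}(n) e^{-nβ} ≤ ξ_v / ξ_{v₀} for all v ∈ V. -/
open scoped ENNReal
open Filter

variable {V : Type*}

/-!
Splitting a first return to `w` according to its first step shows that the truncated generating
functions `F_N(v) = ∑_{1 ≤ n ≤ N} r_{vw}(n) tⁿ` satisfy `F_{N+1} = t A F_N'`, where `F_N'` is `F_N`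
with its value at `w` replaced by `1`. If `t A ξ ≤ ξ` and `F_N ξ_w ≤ ξ`, then also
`F_N' ξ_w ≤ ξ`, so applying `t A` gives `F_{N+1} ξ_w ≤ t A ξ ≤ ξ`. Now let `N → ∞` and take
`t = e^{-β}`.
-/

theorem tsum_mul_update [DecidableEq V] (a f : V → ℝ≥0∞) (w : V) (c : ℝ≥0∞) :
    ∑' u, a u * Function.update f w c u = a w * c + ∑' u, if u = w then 0 else a u * f u := by
  rw [ENNReal.tsum_eq_add_tsum_ite w, Function.update_self]
  congr! 3 with u
  split_ifs with hu
  · rfl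
  · rw [Function.update_of_ne hu]

section FirstReturn

variable [DecidableEq V] (A : V → V → ℝ≥0∞) (t : ℝ≥0∞) (w : V)

/-- The truncated generating function `∑_{1 ≤ n ≤ N} r_{vw}(n) tⁿ` of the first-return quantities.
It is indexed from `n = 1`, which loses nothing because `r_{vw}(0) = 0`. -/
noncomputable def firstReturnSum (N : ℕ) (v : V) : ℝ≥0∞ :=
  ∑ n ∈ Finset.range N, fr A w (n + 1) v * t ^ (n + 1)

theorem sum_range_fr_add_two_mul_pow (N : ℕ) (v : V) :
    ∑ n ∈ Finset.range N, fr A w (n + 2) v * t ^ (n + 2) =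
      t * ∑' u, if u = w then 0 else A v u * firstReturnSum A t w N u := by
  calc ∑ n ∈ Finset.range N, fr A w (n + 2) v * t ^ (n + 2)
      = t * ∑ n ∈ Finset.range N, ∑' u,
          (if u = w then 0 else A v u * fr A w (n + 1) u) * t ^ (n + 1) := by
        simp only [fr, ENNReal.tsum_mul_right, Finset.mul_sum, pow_succ' t (_ + 1),
          mul_left_comm t]
    _ = t * ∑' u, ∑ n ∈ Finset.range N,
          (if u = w then 0 else A v u * fr A w (n + 1) u) * t ^ (n + 1) := by
        rw [Summable.tsum_finsetSum fun _ _ => ENNReal.summable]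
    _ = t * ∑' u, if u = w then 0 else A v u * firstReturnSum A t w N u := by
        congr! 3 with u
        split_ifs <;> simp [firstReturnSum, Finset.mul_sum, mul_assoc]

theorem firstReturnSum_succ (N : ℕ) (v : V) :
    firstReturnSum A t w (N + 1) v =
      t * ∑' u, A v u * Function.update (firstReturnSum A t w N) w 1 u := by
  calc firstReturnSum A t w (N + 1) v
      = ∑ n ∈ Finset.range N, fr A w (n + 2) v * t ^ (n + 2) + A v w * t := by
        simp only [firstReturnSum, Finset.sum_range_succ', fr, zero_add, pow_one]
    _ = t * (A v w + ∑' u, if u = w then 0 else A v u * firstReturnSum A t w N u) := by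
        rw [sum_range_fr_add_two_mul_pow, mul_add, add_comm, mul_comm (A v w)]
    _ = t * ∑' u, A v u * Function.update (firstReturnSum A t w N) w 1 u := by
        rw [tsum_mul_update, mul_one]

theorem tsum_fr_mul_pow_eq_iSup (v : V) :
    ∑' n, fr A w n v * t ^ n = ⨆ N, firstReturnSum A t w N v := by
  rw [ENNReal.tsum_eq_iSup_nat' (tendsto_add_atTop_nat 1)]
  simp only [firstReturnSum, Finset.sum_range_succ', fr, zero_mul, add_zero]

variable {A t} {ξ : V → ℝ≥0∞}

theorem firstReturnSum_mul_le (hξ : ∀ v, t * ∑' u, A v u * ξ u ≤ ξ v) (N : ℕ) (v : V) :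
    firstReturnSum A t w N v * ξ w ≤ ξ v := by
  induction N generalizing v with
  | zero => simp [firstReturnSum]
  | succ N ih =>
    have update_mul_le (u : V) :
        Function.update (firstReturnSum A t w N) w 1 u * ξ w ≤ ξ u := by
      obtain rfl | hu := eq_or_ne u w
      · rw [Function.update_self, one_mul]
      · rw [Function.update_of_ne hu]
        exact ih u
    calc firstReturnSum A t w (N + 1) v * ξ w
        = t * ∑' u, A v u * (Function.update (firstReturnSum A t w N) w 1 u * ξ w) := by
          simp only [firstReturnSum_succ, ← mul_assoc, ENNReal.tsum_mul_right]
      _ ≤ t * ∑' u, A v u * ξ u := by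
          gcongr with u
          exact update_mul_le u
      _ ≤ ξ v := hξ v

theorem tsum_fr_mul_pow_mul_le (hξ : ∀ v, t * ∑' u, A v u * ξ u ≤ ξ v) (v : V) :
    (∑' n, fr A w n v * t ^ n) * ξ w ≤ ξ v := by
  rw [tsum_fr_mul_pow_eq_iSup, ENNReal.iSup_mul]
  exact iSup_le fun N => firstReturnSum_mul_le w hξ N v

end FirstReturn

theorem expn_eq_inv_expb_pow (β : ℝ) (n : ℕ) : expn β n = (expb β)⁻¹ ^ n := by
  rw [expn, expb, ← ENNReal.ofReal_inv_of_pos (Real.exp_pos β),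
    ← ENNReal.ofReal_pow (inv_nonneg.2 (Real.exp_pos β).le), ← Real.exp_neg, ← Real.exp_nat_mul,
    neg_mul_comm]

theorem stmt13_general [DecidableEq V] (A : V → V → ℝ≥0∞) (β : ℝ) (ξ : V → ℝ≥0∞)
    (hsub : ∀ v, ∑' w, A v w * ξ w ≤ expb β * ξ v)
    (v₀ : V) (h0 : ξ v₀ ≠ 0) (hfin : ξ v₀ ≠ ⊤) :
    ∀ v, ∑' n : ℕ, fr A v₀ n v * expn β n ≤ ξ v / ξ v₀ := by
  intro v
  have expb_ne_zero : expb β ≠ 0 := (ENNReal.ofReal_pos.2 (Real.exp_pos β)).ne'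
  have inv_expb_mul_le (u : V) : (expb β)⁻¹ * ∑' w, A u w * ξ w ≤ ξ u :=
    (ENNReal.inv_mul_le_iff expb_ne_zero ENNReal.ofReal_ne_top).2 (hsub u)
  rw [ENNReal.le_div_iff_mul_le (.inl h0) (.inl hfin)]
  simpa only [expn_eq_inv_expb_pow] using tsum_fr_mul_pow_mul_le v₀ inv_expb_mul_le v

/-- Under the standing assumptions, if `ξ : V → [0,∞)` satisfies
`∑_w A_{vw} ξ_w ≤ e^β ξ_v` for all `v` and `ξ_{v₀} ≠ 0`, then
`∑_{n≥1} r_{vv₀}(n) e^{-nβ} ≤ ξ_v / ξ_{v₀}` for all `v`. -/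
theorem stmt13 [Countable V] [DecidableEq V] (A : V → V → ℝ≥0∞)
    (hst : Standing A) (β : ℝ) (ξ : V → ℝ≥0∞) (hξfin : ∀ v, ξ v ≠ ⊤)
    (hsub : ∀ v, ∑' w, A v w * ξ w ≤ expb β * ξ v)
    (v₀ : V) (h0 : ξ v₀ ≠ 0) :
    ∀ v, ∑' n : ℕ, fr A v₀ n v * expn β n ≤ ξ v / ξ v₀ := by
  exact stmt13_general A β ξ hsub v₀ h0 (hξfin v₀)
end
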